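/- Let 𝒫 ⊂ 𝒟 be a mutually absolutely continuous set of laws with Lebesgue density on ℝ^d, and let 𝒫_* denote the set of all finite convex mixtures of elements of 𝒫. Then the closed fork-convex hull of the i.i.d. laws 𝒫^∞ contains all i.i.d. laws over finite mixtures: cl-f-conv(𝒫^∞) ⊇ (𝒫_*)^∞. -/

import Mathlib

open MeasureTheory ProbabilityTheory Filter Finset Matrix
open scoped Classical

noncomputable section

namespace SeqTest

/-- `ℝ^d`. -/
abbrev RV (d : ℕ) := Fin d → ℝ

/-- The sequence space `Ω = (ℝ^d)^ℕ`. -/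
abbrev Seq (d : ℕ) := ℕ → RV d

variable (d : ℕ)


/-- The first `t` coordinates of a sequence. -/
def prefixMap (t : ℕ) : Seq d → (Fin t → RV d) := fun ω s => ω s

/-- The law of the first `t` coordinates under a sequential law `μ`. -/
def prefixLaw (μ : Measure (Seq d)) (t : ℕ) : Measure (Fin t → RV d) :=
  μ.map (prefixMap d t)

/-- The natural filtration of the coordinate process: `ℱ t = σ(X_0, …, X_{t-1})`. -/
def F : Filtration ℕ (inferInstance : MeasurableSpace (Seq d)) where
  seq t := ⨆ s ∈ Finset.range t, MeasurableSpace.comap (fun ω : Seq d => ω s) inferInstance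
  mono' := by
    intro i j hij
    exact biSup_mono fun s hs => Finset.mem_range.mpr
      (lt_of_lt_of_le (Finset.mem_range.mp hs) hij)
  le' := by
    intro t
    refine iSup₂_le fun s _ => ?_
    exact measurable_iff_comap_le.mp (measurable_pi_apply s)

/-- Local absolute continuity of sequential laws: every prefix law of `μ` is
absolutely continuous w.r.t. the corresponding prefix law of `Γ`. -/
def LocAC (μ Γ : Measure (Seq d)) : Prop := ∀ t, prefixLaw d μ t ≪ prefixLaw d Γ t

/-- The density (likelihood-ratio) process `Z_t^μ = d(μ|_t)/d(Γ|_t)` evaluated along the path. -/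
def Z (μ Γ : Measure (Seq d)) (t : ℕ) (ω : Seq d) : ℝ :=
  ((prefixLaw d μ t).rnDeriv (prefixLaw d Γ t) (prefixMap d t ω)).toReal

/-- The standard Gaussian measure on `ℝ^d`. -/
def stdGaussian : Measure (RV d) := Measure.pi fun _ => gaussianReal 0 1

/-- `Γ` is the law of an i.i.d. sequence of standard Gaussians: characterized through its
finite-dimensional rectangle probabilities. -/
def IsGamma (Γ : Measure (Seq d)) : Prop :=
  IsProbabilityMeasure Γ ∧
    ∀ (t : ℕ) (A : Fin t → Set (RV d)), (∀ s, MeasurableSet (A s)) →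
      prefixLaw d Γ t (Set.univ.pi A) = ∏ s, stdGaussian d (A s)

/-- `M` is a nonnegative supermartingale for the sequential law `μ`
(w.r.t. the natural filtration). -/
def IsNSM (μ : Measure (Seq d)) (M : ℕ → Seq d → ℝ) : Prop :=
  (∀ t ω, 0 ≤ M t ω) ∧ Supermartingale M (F d) μ

/-- `M` is a nonnegative martingale for the sequential law `μ`. -/
def IsNM (μ : Measure (Seq d)) (M : ℕ → Seq d → ℝ) : Prop :=
  (∀ t ω, 0 ≤ M t ω) ∧ Martingale M (F d) μ


/-- `R` is the `(s,h)`-fork-convex combination of `P` with `Q` (relative to the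
reference law `Γ`), described through its density process. -/
def IsFCC (Γ P Q : Measure (Seq d)) (s : ℕ) (h : Seq d → ℝ) (R : Measure (Seq d)) : Prop :=
  IsProbabilityMeasure P ∧ IsProbabilityMeasure Q ∧ LocAC d P Γ ∧ LocAC d Q Γ ∧
  Measurable[F d s] h ∧ (∀ ω, h ω ∈ Set.Icc (0 : ℝ) 1) ∧
  Γ {ω | h ω < 1 ∧ Z d Q Γ s ω = 0} = 0 ∧
  IsProbabilityMeasure R ∧ LocAC d R Γ ∧
  ∀ t : ℕ, (fun ω => Z d R Γ t ω) =ᵐ[Γ]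
    (fun ω => if t ≤ s then Z d P Γ t ω
      else h ω * Z d P Γ t ω + (1 - h ω) * Z d Q Γ t ω * (Z d P Γ s ω / Z d Q Γ s ω))

/-- A set of sequential laws is fork-convex if it is closed under fork-convex combinations. -/
def IsForkConvex (Γ : Measure (Seq d)) (S : Set (Measure (Seq d))) : Prop :=
  ∀ P ∈ S, ∀ Q ∈ S, ∀ (s : ℕ) (h : Seq d → ℝ) (R : Measure (Seq d)),
    IsFCC d Γ P Q s h R → R ∈ S

/-- The fork-convex hull: the smallest fork-convex set containing `𝔓`. -/
def fconv (Γ : Measure (Seq d)) (𝔓 : Set (Measure (Seq d))) : Set (Measure (Seq d)) :=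
  ⋂₀ {S | 𝔓 ⊆ S ∧ IsForkConvex d Γ S}

/-- Convergence of sequential laws: the density processes converge in `L¹(Γ)` at every fixed time. -/
def TendstoLocL1 (Γ : Measure (Seq d)) (Pn : ℕ → Measure (Seq d)) (P : Measure (Seq d)) : Prop :=
  ∀ t, Tendsto (fun n => ∫ ω, |Z d (Pn n) Γ t ω - Z d P Γ t ω| ∂Γ) atTop (nhds 0)

/-- The closed fork-convex hull: the closure of the fork-convex hull under local `L¹(Γ)`
convergence of density processes. -/
def clfconv (Γ : Measure (Seq d)) (𝔓 : Set (Measure (Seq d))) : Set (Measure (Seq d)) :=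
  {P | IsProbabilityMeasure P ∧ LocAC d P Γ ∧
    ∃ Pn : ℕ → Measure (Seq d), (∀ n, Pn n ∈ fconv d Γ 𝔓) ∧ TendstoLocL1 d Γ Pn P}

/-- `μ` is the law of an i.i.d. sequence with marginal `P`. -/
def IsIIDLaw (μ : Measure (Seq d)) (P : Measure (RV d)) : Prop :=
  IsProbabilityMeasure μ ∧
    ∀ (t : ℕ) (A : Fin t → Set (RV d)), (∀ s, MeasurableSet (A s)) →
      prefixLaw d μ t (Set.univ.pi A) = ∏ s, P (A s)

/-- `μ` is the law of an independent sequence with marginals `Ps 0, Ps 1, …`. -/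
def IsProductLaw (μ : Measure (Seq d)) (Ps : ℕ → Measure (RV d)) : Prop :=
  IsProbabilityMeasure μ ∧
    ∀ (t : ℕ) (A : Fin t → Set (RV d)), (∀ s, MeasurableSet (A s)) →
      prefixLaw d μ t (Set.univ.pi A) = ∏ s : Fin t, Ps s (A s)

/-- The set of i.i.d. sequential laws with marginals in `PP`. -/
def iidLaws (PP : Set (Measure (RV d))) : Set (Measure (Seq d)) :=
  {μ | ∃ P ∈ PP, IsIIDLaw d μ P}

/-- The set of independent-product sequential laws with all marginals in `PP`. -/
def productLaws (PP : Set (Measure (RV d))) : Set (Measure (Seq d)) :=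
  {μ | ∃ Ps : ℕ → Measure (RV d), (∀ t, Ps t ∈ PP) ∧ IsProductLaw d μ Ps}




/-- The density of the `d`-dimensional Gaussian with mean `m` and covariance matrix `S`. -/
def gaussDensityFn (m : RV d) (S : Matrix (Fin d) (Fin d) ℝ) (x : RV d) : ℝ :=
  (2 * Real.pi) ^ (-(d : ℝ) / 2) * S.det ^ (-(1 : ℝ) / 2) *
    Real.exp (-(1 / 2) * ((x - m) ⬝ᵥ (S⁻¹ *ᵥ (x - m))))

/-- A finite mixture of nondegenerate Gaussian densities. -/
def IsGaussianMixture (g : RV d → ℝ) : Prop :=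
  ∃ (k : ℕ) (α : Fin k → ℝ) (ms : Fin k → RV d) (Ss : Fin k → Matrix (Fin d) (Fin d) ℝ),
    (∀ i, 0 ≤ α i) ∧ (∑ i, α i = 1) ∧ (∀ i, (Ss i).PosDef) ∧
    g = fun x => ∑ i, α i * gaussDensityFn d (ms i) (Ss i) x

/-- A log-concave nonnegative function on `ℝ^d`. -/
def IsLogConcaveFn (p : RV d → ℝ) : Prop :=
  (∀ x, 0 ≤ p x) ∧
    ∀ (x y : RV d) (l : ℝ), 0 ≤ l → l ≤ 1 →
      p x ^ l * p y ^ (1 - l) ≤ p (l • x + (1 - l) • y)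

/-- A log-concave probability density on `ℝ^d`. -/
def IsLogConcaveDensity (p : RV d → ℝ) : Prop :=
  Measurable p ∧ IsLogConcaveFn d p ∧ ∫ x, p x = 1

/-- The set `𝓛` of laws on `ℝ^d` with a log-concave Lebesgue density. -/
def logConcaveLaws : Set (Measure (RV d)) :=
  {P | IsProbabilityMeasure P ∧ ∃ p : RV d → ℝ, Measurable p ∧ IsLogConcaveFn d p ∧
    P = volume.withDensity fun x => ENNReal.ofReal (p x)}

/-- The set `𝒢` of nondegenerate Gaussian laws on `ℝ^d`. -/
def gaussianLaws : Set (Measure (RV d)) :=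
  {P | ∃ (m : RV d) (S : Matrix (Fin d) (Fin d) ℝ), S.PosDef ∧
    P = volume.withDensity fun x => ENNReal.ofReal (gaussDensityFn d m S x)}

/-- An estimator sequence: a measurable family of (strictly positive) predictable
probability density estimates. -/
def IsEstimatorSeq (E : (t : ℕ) → (Fin t → RV d) → RV d → ℝ) : Prop :=
  (∀ t, Measurable fun q : (Fin t → RV d) × RV d => E t q.1 q.2) ∧
  (∀ t h x, 0 < E t h x) ∧ (∀ t h, ∫ x, E t h x = 1)

/-- The universal likelihood ratio (ULR) process. Time `t` corresponds to having observed
the `t` samples `ω 0, …, ω (t-1)`. -/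
def ULR (E : (t : ℕ) → (Fin t → RV d) → RV d → ℝ) (t : ℕ) (ω : Seq d) : ℝ :=
  if t ≤ d then 1 else
    (∏ j ∈ Finset.Ico d t, E j (fun i : Fin j => ω i) (ω j)) /
      ⨆ p : {p : RV d → ℝ // IsLogConcaveDensity d p}, ∏ j ∈ Finset.Ico d t, p.1 (ω j)

/-- The prediction (cumulative log-loss) regret of the estimator sequence `E` relative to
the density of `P`. -/
def regret (P : Measure (RV d)) (E : (t : ℕ) → (Fin t → RV d) → RV d → ℝ)
    (t : ℕ) (ω : Seq d) : ℝ :=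
  ∑ j ∈ Finset.range t,
    (Real.log ((P.rnDeriv volume (ω j)).toReal) - Real.log (E j (fun i : Fin j => ω i) (ω j)))

/-- The Hellinger distance between two laws on `ℝ^d` (via their Lebesgue densities). -/
def hellinger (P Q : Measure (RV d)) : ℝ :=
  Real.sqrt ((1 / 2) *
    ∫ x, (Real.sqrt ((P.rnDeriv volume x).toReal) - Real.sqrt ((Q.rnDeriv volume x).toReal)) ^ 2)

/-- The Hellinger distance from `P` to the class of log-concave laws. -/
def dHLC (P : Measure (RV d)) : ℝ :=
  sInf {r | ∃ L ∈ logConcaveLaws d, r = hellinger d P L}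

/-- The Kullback–Leibler divergence. -/
def klDivR {α : Type*} [MeasurableSpace α] (P Q : Measure α) : EReal :=
  if P ≪ Q ∧ Integrable (fun x => Real.log ((P.rnDeriv Q x).toReal)) P
  then ((∫ x, Real.log ((P.rnDeriv Q x).toReal) ∂P : ℝ) : EReal) else ⊤

/-- Membership in `𝒟₁`. -/
def MemD1 (P : Measure (RV d)) : Prop :=
  IsProbabilityMeasure P ∧ P ≪ volume ∧
  Integrable (fun x => max 0 (Real.log ((P.rnDeriv volume x).toReal))) P ∧
  Integrable (fun x => Real.sqrt (∑ i, (x i) ^ 2)) P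

/-- The log-likelihood gap `σ_t(P)` between the true density and the log-concave maximum
likelihood. -/
def sigmaT (P : Measure (RV d)) (t : ℕ) (ω : Seq d) : ℝ :=
  (∑ j ∈ Finset.range t, Real.log ((P.rnDeriv volume (ω j)).toReal)) -
    ⨆ p : {p : RV d → ℝ // IsLogConcaveDensity d p},
      ∑ j ∈ Finset.range t, Real.log (p.1 (ω j))

/-- The mean vector of `P`. -/
def meanVec (P : Measure (RV d)) : RV d := fun i => ∫ x, x i ∂P

/-- `Δ_P = min_{‖v‖=1} E_P |⟨v, X − E_P X⟩|`. -/
def DeltaP (P : Measure (RV d)) : ℝ :=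
  sInf {r | ∃ v : RV d, (∑ i, (v i) ^ 2) = 1 ∧
    r = ∫ x, |∑ i, v i * (x i - meanVec d P i)| ∂P}

/-- The class `𝒟_{Box,Lip,B}`: laws with a `1`-Lipschitz density supported on `[-1,1]^d`
taking values in `[1/B, B]` there. -/
def DBoxLip (B : ℝ) : Set (Measure (RV d)) :=
  {P | IsProbabilityMeasure P ∧ ∃ p : RV d → ℝ, Measurable p ∧
    P = volume.withDensity (fun x => ENNReal.ofReal (p x)) ∧
    (∀ x, ¬ (∀ i, |x i| ≤ 1) → p x = 0) ∧
    (∀ x, (∀ i, |x i| ≤ 1) → 1 / B ≤ p x ∧ p x ≤ B) ∧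
    (∀ x y, (∀ i, |x i| ≤ 1) → (∀ i, |y i| ≤ 1) →
      |p x - p y| ≤ Real.sqrt (∑ i, (x i - y i) ^ 2))}



/-- The set of finite convex mixtures of elements of `PP`. -/
def finiteMixtures (PP : Set (Measure (RV d))) : Set (Measure (RV d)) :=
  {Q | ∃ (k : ℕ) (α : Fin k → ℝ) (P : Fin k → Measure (RV d)),
    (∀ i, 0 ≤ α i) ∧ (∑ i, α i = 1) ∧ (∀ i, P i ∈ PP) ∧
    Q = ∑ i, (ENNReal.ofReal (α i)) • P i}

theorem absolutelyContinuous_pi_fin {α : Type*} [MeasurableSpace α] :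
    ∀ {n : ℕ} (μ ν : Fin n → Measure α) [∀ i, SigmaFinite (μ i)] [∀ i, SigmaFinite (ν i)],
      (∀ i, μ i ≪ ν i) → Measure.pi μ ≪ Measure.pi ν := by
  intro n
  induction n with
  | zero =>
    intro μ ν _ _ _
    rw [Measure.pi_of_empty μ, Measure.pi_of_empty ν]
  | succ n ih =>
    intro μ ν _ _ h
    have hμ := (measurePreserving_piFinSuccAbove μ 0).symm
    have hν := (measurePreserving_piFinSuccAbove ν 0).symm
    rw [← hμ.map_eq, ← hν.map_eq]
    exact ((h 0).prod (ih _ _ fun i => h _)).map hμ.measurable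

theorem pi_withDensity {ι α : Type*} [Fintype ι] [MeasurableSpace α] (μ : ι → Measure α)
    [∀ i, IsProbabilityMeasure (μ i)] (f : ι → α → ENNReal) (hf : ∀ i, Measurable (f i))
    [∀ i, SigmaFinite ((μ i).withDensity (f i))] :
    Measure.pi (fun i => (μ i).withDensity (f i)) =
      (Measure.pi μ).withDensity (fun x => ∏ i, f i (x i)) := by
  refine Measure.pi_eq fun A hA => ?_
  have hind : ∀ x : ι → α, (Set.univ.pi A).indicator (fun x => ∏ i, f i (x i)) x =
      ∏ i, (A i).indicator (f i) (x i) := by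
    intro x
    by_cases hx : x ∈ Set.univ.pi A
    · rw [Set.indicator_of_mem hx]
      exact Finset.prod_congr rfl fun i _ =>
        (Set.indicator_of_mem (hx i (Set.mem_univ i)) (f i)).symm
    · rw [Set.indicator_of_notMem hx]
      obtain ⟨i, hi⟩ : ∃ i, x i ∉ A i := by simpa [Set.mem_pi] using hx
      exact (Finset.prod_eq_zero (Finset.mem_univ i) (Set.indicator_of_notMem hi _)).symm
  rw [withDensity_apply _ (MeasurableSet.univ_pi hA),
    ← lintegral_indicator (MeasurableSet.univ_pi hA), lintegral_congr hind,
    lintegral_prod_eq_prod_lintegral_of_indepFun Finset.univ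
      (fun i (x : ι → α) => (A i).indicator (f i) (x i))
      (iIndepFun_pi fun i => ((hf i).indicator (hA i)).aemeasurable)
      fun i => ((hf i).indicator (hA i)).comp (measurable_pi_apply i)]
  refine Finset.prod_congr rfl fun i _ => ?_
  rw [(measurePreserving_eval μ i).lintegral_comp ((hf i).indicator (hA i)),
    lintegral_indicator (hA i), withDensity_apply _ (hA i)]

instance : IsProbabilityMeasure (stdGaussian d) := by
  unfold stdGaussian; infer_instance

theorem volume_absolutelyContinuous_stdGaussian :
    (volume : Measure (RV d)) ≪ stdGaussian d :=
  absolutelyContinuous_pi_fin _ _ fun _ => gaussianReal_absolutelyContinuous' 0 one_ne_zero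

theorem measurable_prefixMap (t : ℕ) : Measurable (prefixMap d t) :=
  measurable_pi_lambda _ fun s => measurable_pi_apply (s : ℕ)

variable {d}

theorem IsProductLaw.prefixLaw_eq {μ : Measure (Seq d)} {Ps : ℕ → Measure (RV d)}
    (hμ : IsProductLaw d μ Ps) [∀ j, IsProbabilityMeasure (Ps j)] (t : ℕ) :
    prefixLaw d μ t = Measure.pi fun s : Fin t => Ps s :=
  (Measure.pi_eq fun A hA => hμ.2 t A hA).symm

theorem isProductLaw_infinitePi (Ps : ℕ → Measure (RV d)) [∀ j, IsProbabilityMeasure (Ps j)] :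
    IsProductLaw d (Measure.infinitePi Ps) Ps := by
  refine ⟨inferInstance, fun t A hA => ?_⟩
  let B : ℕ → Set (RV d) := fun j => if h : j < t then A ⟨j, h⟩ else Set.univ
  have hB : ∀ s : Fin t, B s = A s := fun s => by simp [B]
  have hpre : prefixMap d t ⁻¹' Set.univ.pi A = Set.pi (Finset.range t) B := by
    ext ω
    simp only [Set.mem_preimage, Set.mem_pi, Set.mem_univ, forall_true_left, Finset.coe_range,
      Set.mem_Iio]
    exact ⟨fun h j hj => by simpa [B, hj, prefixMap] using h ⟨j, hj⟩,
      fun h s => by simpa only [hB, prefixMap] using h s s.2⟩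
  rw [prefixLaw, Measure.map_apply (measurable_prefixMap d t) (MeasurableSet.univ_pi hA), hpre,
    Measure.infinitePi_pi, Finset.prod_range]
  · simp only [hB]
  · intro j hj
    simpa [B, Finset.mem_range.mp hj] using hA ⟨j, Finset.mem_range.mp hj⟩

theorem IsGamma.ae_eval {Γ : Measure (Seq d)} (hΓ : IsGamma d Γ) {p : RV d → Prop}
    (hp : ∀ᵐ x ∂stdGaussian d, p x) (j : ℕ) : ∀ᵐ ω ∂Γ, p (ω j) := by
  have hpre : prefixLaw d Γ (j + 1) = Measure.pi fun _ : Fin (j + 1) => stdGaussian d :=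
    IsProductLaw.prefixLaw_eq (Ps := fun _ => stdGaussian d) hΓ (j + 1)
  have h := (Measure.quasiMeasurePreserving_eval (fun _ : Fin (j + 1) => stdGaussian d)
    (Fin.last j)).ae hp
  rw [← hpre] at h
  exact ae_of_ae_map (measurable_prefixMap d (j + 1)).aemeasurable h

/-- The real-valued density of a law on `ℝ^d` relative to the standard Gaussian. -/
def gaussRatio (P : Measure (RV d)) (x : RV d) : ℝ := (P.rnDeriv (stdGaussian d) x).toReal

theorem measurable_gaussRatio (P : Measure (RV d)) : Measurable (gaussRatio P) :=
  (Measure.measurable_rnDeriv _ _).ennreal_toReal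

theorem IsProductLaw.locAC {Γ μ : Measure (Seq d)} (hΓ : IsGamma d Γ) {Ps : ℕ → Measure (RV d)}
    (hμ : IsProductLaw d μ Ps) [∀ j, IsProbabilityMeasure (Ps j)]
    (hac : ∀ j, Ps j ≪ stdGaussian d) : LocAC d μ Γ := fun t => by
  rw [hμ.prefixLaw_eq, IsProductLaw.prefixLaw_eq (Ps := fun _ => stdGaussian d) hΓ t]
  exact absolutelyContinuous_pi_fin _ _ fun s => hac s

theorem IsProductLaw.Z_ae_eq {Γ μ : Measure (Seq d)} (hΓ : IsGamma d Γ)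
    {Ps : ℕ → Measure (RV d)} (hμ : IsProductLaw d μ Ps) [∀ j, IsProbabilityMeasure (Ps j)]
    (hac : ∀ j, Ps j ≪ stdGaussian d) (t : ℕ) :
    Z d μ Γ t =ᵐ[Γ] fun ω => ∏ j ∈ Finset.range t, gaussRatio (Ps j) (ω j) := by
  have hΓt : prefixLaw d Γ t = Measure.pi fun _ : Fin t => stdGaussian d :=
    IsProductLaw.prefixLaw_eq (Ps := fun _ => stdGaussian d) hΓ t
  have hμt : prefixLaw d μ t = (prefixLaw d Γ t).withDensity
      (fun x => ∏ s : Fin t, (Ps s).rnDeriv (stdGaussian d) (x s)) := by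
    have hP : ∀ j, (stdGaussian d).withDensity ((Ps j).rnDeriv (stdGaussian d)) = Ps j :=
      fun j => by
        have := Measure.haveLebesgueDecomposition_of_sigmaFinite (Ps j) (stdGaussian d)
        exact Measure.withDensity_rnDeriv_eq _ _ (hac j)
    rw [hΓt, ← pi_withDensity _ _ fun s => Measure.measurable_rnDeriv _ _, hμ.prefixLaw_eq]
    simp only [hP]
  have : SigmaFinite (prefixLaw d Γ t) := by rw [hΓt]; infer_instance
  have hrn := Measure.rnDeriv_withDensity (prefixLaw d Γ t)
    (f := fun x => ∏ s : Fin t, (Ps s).rnDeriv (stdGaussian d) (x s))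
    (Finset.measurable_prod _ fun s _ =>
      (Measure.measurable_rnDeriv _ _).comp (measurable_pi_apply s))
  rw [← hμt] at hrn
  filter_upwards [ae_of_ae_map (measurable_prefixMap d t).aemeasurable hrn] with ω hω
  rw [Z, hω, ENNReal.toReal_prod, Finset.prod_range]
  rfl

theorem gaussRatio_eq_zero_of_ac {P Q : Measure (RV d)} [IsProbabilityMeasure P]
    [IsProbabilityMeasure Q] (hPQ : P ≪ Q) :
    ∀ᵐ x ∂stdGaussian d, gaussRatio Q x = 0 → gaussRatio P x = 0 := by
  filter_upwards [Measure.rnDeriv_mul_rnDeriv (κ := stdGaussian d) hPQ] with x hx h0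
  simp only [gaussRatio] at *
  rw [← hx, Pi.mul_apply, ENNReal.toReal_mul, h0, mul_zero]

theorem gaussRatio_mix (P Q : Measure (RV d)) [IsProbabilityMeasure P]
    [IsProbabilityMeasure Q] {a b : ℝ} (ha : 0 ≤ a) (hb : 0 ≤ b) :
    ∀ᵐ x ∂stdGaussian d, gaussRatio (ENNReal.ofReal a • P + ENNReal.ofReal b • Q) x =
      a * gaussRatio P x + b * gaussRatio Q x := by
  have : IsFiniteMeasure (ENNReal.ofReal a • P) := P.smul_finite ENNReal.ofReal_ne_top
  have : IsFiniteMeasure (ENNReal.ofReal b • Q) := Q.smul_finite ENNReal.ofReal_ne_top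
  filter_upwards [Measure.rnDeriv_add' (ENNReal.ofReal a • P) (ENNReal.ofReal b • Q)
      (stdGaussian d),
    Measure.rnDeriv_smul_left_of_ne_top' P (stdGaussian d) (r := ENNReal.ofReal a)
      ENNReal.ofReal_ne_top,
    Measure.rnDeriv_smul_left_of_ne_top' Q (stdGaussian d) (r := ENNReal.ofReal b)
      ENNReal.ofReal_ne_top,
    Measure.rnDeriv_ne_top P (stdGaussian d), Measure.rnDeriv_ne_top Q (stdGaussian d)]
    with x h h1 h2 hP hQ
  simp only [gaussRatio]
  rw [h, Pi.add_apply, h1, h2, Pi.smul_apply, Pi.smul_apply, smul_eq_mul, smul_eq_mul,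
    ENNReal.toReal_add (ENNReal.mul_ne_top ENNReal.ofReal_ne_top hP)
      (ENNReal.mul_ne_top ENNReal.ofReal_ne_top hQ),
    ENNReal.toReal_mul, ENNReal.toReal_mul, ENNReal.toReal_ofReal ha, ENNReal.toReal_ofReal hb]

theorem measurable_F_eval {j s : ℕ} (hj : j < s) : Measurable[F d s] fun ω : Seq d => ω j := by
  rw [measurable_iff_comap_le]
  exact le_iSup₂_of_le (f := fun s (_ : s ∈ Finset.range _) =>
    MeasurableSpace.comap (fun ω : Seq d => ω s) inferInstance) j (Finset.mem_range.mpr hj) le_rfl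

/-- Following one product law up to time `s` and another one afterwards is a fork-convex
combination of the two. -/
theorem exists_isFCC_switch {Γ μ ν ρ : Measure (Seq d)} (hΓ : IsGamma d Γ)
    {Ps Qs : ℕ → Measure (RV d)} [∀ j, IsProbabilityMeasure (Ps j)]
    [∀ j, IsProbabilityMeasure (Qs j)] (hP : ∀ j, Ps j ≪ stdGaussian d)
    (hQ : ∀ j, Qs j ≪ stdGaussian d) (s : ℕ) (hPQ : ∀ j < s, Ps j ≪ Qs j)
    (hμ : IsProductLaw d μ Ps) (hν : IsProductLaw d ν Qs)
    (hρ : IsProductLaw d ρ fun j => if j < s then Ps j else Qs j) :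
    ∃ h, IsFCC d Γ μ ν s h ρ := by
  have : ∀ j, IsProbabilityMeasure (if j < s then Ps j else Qs j) := fun j => by
    split_ifs <;> infer_instance
  have hR : ∀ j, (if j < s then Ps j else Qs j) ≪ stdGaussian d := fun j => by
    split_ifs
    exacts [hP j, hQ j]
  have hmeas : Measurable[F d s] fun ω : Seq d =>
      ∏ j ∈ Finset.range s, gaussRatio (Qs j) (ω j) :=
    Finset.measurable_prod _ fun j hj =>
      (measurable_gaussRatio _).comp (measurable_F_eval (Finset.mem_range.mp hj))
  refine ⟨fun ω => if ∏ j ∈ Finset.range s, gaussRatio (Qs j) (ω j) = 0 then 1 else 0,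
    hμ.1, hν.1, hμ.locAC hΓ hP, hν.locAC hΓ hQ, ?_, ?_, ?_, hρ.1, hρ.locAC hΓ hR, ?_⟩
  · exact Measurable.ite (hmeas (measurableSet_singleton 0)) measurable_const measurable_const
  · intro ω
    dsimp only
    split_ifs <;> simp
  · rw [measure_eq_zero_iff_ae_notMem]
    filter_upwards [hν.Z_ae_eq hΓ hQ s] with ω hω
    rintro ⟨h1, h2⟩
    rw [hω] at h2
    simp [h2] at h1
  · intro t
    have hzero : ∀ᵐ ω ∂Γ, ∀ j < s, gaussRatio (Qs j) (ω j) = 0 → gaussRatio (Ps j) (ω j) = 0 := by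
      rw [ae_all_iff]
      intro j
      by_cases hj : j < s
      · filter_upwards [hΓ.ae_eval (gaussRatio_eq_zero_of_ac (hPQ j hj)) j] with ω hω _
        exact hω
      · exact ae_of_all _ fun ω h => absurd h hj
    filter_upwards [hμ.Z_ae_eq hΓ hP t, hμ.Z_ae_eq hΓ hP s, hν.Z_ae_eq hΓ hQ t,
      hν.Z_ae_eq hΓ hQ s, hρ.Z_ae_eq hΓ hR t, hzero] with ω h1 h2 h3 h4 h5 h0
    rw [h1, h2, h3, h4, h5]
    by_cases hts : t ≤ s
    · rw [if_pos hts]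
      refine Finset.prod_congr rfl fun j hj => ?_
      rw [if_pos ((Finset.mem_range.mp hj).trans_le hts)]
    rw [if_neg hts]
    have hst : s ≤ t := (not_le.mp hts).le
    have hprefix : ∏ j ∈ Finset.range s, gaussRatio (if j < s then Ps j else Qs j) (ω j) =
        ∏ j ∈ Finset.range s, gaussRatio (Ps j) (ω j) :=
      Finset.prod_congr rfl fun j hj => by rw [if_pos (Finset.mem_range.mp hj)]
    have htail : ∏ j ∈ Finset.Ico s t, gaussRatio (if j < s then Ps j else Qs j) (ω j) =
        ∏ j ∈ Finset.Ico s t, gaussRatio (Qs j) (ω j) :=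
      Finset.prod_congr rfl fun j hj => by rw [if_neg (not_lt.mpr (Finset.mem_Ico.mp hj).1)]
    rw [← Finset.prod_range_mul_prod_Ico (fun j => gaussRatio _ (ω j)) hst,
      ← Finset.prod_range_mul_prod_Ico (fun j => gaussRatio (Ps j) (ω j)) hst,
      ← Finset.prod_range_mul_prod_Ico (fun j => gaussRatio (Qs j) (ω j)) hst, hprefix, htail]
    by_cases hz : ∏ j ∈ Finset.range s, gaussRatio (Qs j) (ω j) = 0
    · obtain ⟨j, hj, hj0⟩ := Finset.prod_eq_zero_iff.mp hz
      have : ∏ j ∈ Finset.range s, gaussRatio (Ps j) (ω j) = 0 :=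
        Finset.prod_eq_zero hj (h0 j (Finset.mem_range.mp hj) hj0)
      simp [this]
    · rw [if_neg hz]
      field_simp
      ring

/-- Mixing a single marginal of a product law is a fork-convex combination at time `0`. -/
theorem isFCC_mix {Γ μ ν ρ : Measure (Seq d)} (hΓ : IsGamma d Γ)
    {Ps Qs Rs : ℕ → Measure (RV d)} [∀ j, IsProbabilityMeasure (Ps j)]
    [∀ j, IsProbabilityMeasure (Qs j)] [∀ j, IsProbabilityMeasure (Rs j)]
    (hP : ∀ j, Ps j ≪ stdGaussian d) (hQ : ∀ j, Qs j ≪ stdGaussian d)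
    (hR : ∀ j, Rs j ≪ stdGaussian d) {a b : ℝ} (ha : 0 ≤ a) (hb : 0 ≤ b) (hab : a + b = 1)
    (n : ℕ) (hPn : ∀ j, j ≠ n → Ps j = Rs j) (hQn : ∀ j, j ≠ n → Qs j = Rs j)
    (hRn : Rs n = ENNReal.ofReal a • Ps n + ENNReal.ofReal b • Qs n)
    (hμ : IsProductLaw d μ Ps) (hν : IsProductLaw d ν Qs) (hρ : IsProductLaw d ρ Rs) :
    IsFCC d Γ μ ν 0 (fun _ => a) ρ := by
  refine ⟨hμ.1, hν.1, hμ.locAC hΓ hP, hν.locAC hΓ hQ, measurable_const,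
    fun _ => ⟨ha, by linarith⟩, ?_, hρ.1, hρ.locAC hΓ hR, ?_⟩
  · rw [measure_eq_zero_iff_ae_notMem]
    filter_upwards [hν.Z_ae_eq hΓ hQ 0] with ω hω
    rintro ⟨-, h⟩
    simp [hω] at h
  · intro t
    filter_upwards [hμ.Z_ae_eq hΓ hP t, hμ.Z_ae_eq hΓ hP 0, hν.Z_ae_eq hΓ hQ t,
      hν.Z_ae_eq hΓ hQ 0, hρ.Z_ae_eq hΓ hR t,
      hΓ.ae_eval (gaussRatio_mix (Ps n) (Qs n) ha hb) n] with ω h1 h2 h3 h4 h5 h6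
    rw [h1, h2, h3, h4, h5]
    obtain rfl : b = 1 - a := by linarith
    by_cases ht : t ≤ 0
    · simp [Nat.le_zero.mp ht]
    rw [if_neg ht]
    simp only [Finset.range_zero, Finset.prod_empty, div_one, mul_one]
    have hprod : ∀ Ms : ℕ → Measure (RV d), (∀ j, j ≠ n → Ms j = Rs j) → ∀ T : Finset ℕ, n ∉ T →
        ∏ j ∈ T, gaussRatio (Ms j) (ω j) = ∏ j ∈ T, gaussRatio (Rs j) (ω j) :=
      fun Ms hMs T hT => Finset.prod_congr rfl fun j hj => by
        rw [hMs j (ne_of_mem_of_not_mem hj hT)]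
    by_cases hnt : n ∈ Finset.range t
    · rw [← Finset.mul_prod_erase _ _ hnt, ← Finset.mul_prod_erase _ _ hnt,
        ← Finset.mul_prod_erase _ _ hnt,
        hprod Ps hPn _ (Finset.notMem_erase n _), hprod Qs hQn _ (Finset.notMem_erase n _), hRn,
        h6]
      ring
    · rw [hprod Ps hPn _ hnt, hprod Qs hQn _ hnt]
      ring

/-- A set of measures closed under binary convex combinations is closed under finite ones. -/
theorem sum_smul_mem_of_mix_mem {α ι : Type*} [MeasurableSpace α] {C : Set (Measure α)}
    (hC : ∀ M ∈ C, ∀ N ∈ C, ∀ a b : ℝ, 0 ≤ a → 0 ≤ b → a + b = 1 →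
      ENNReal.ofReal a • M + ENNReal.ofReal b • N ∈ C)
    (w : ι → ℝ) (hw : ∀ i, 0 ≤ w i) (P : ι → Measure α) (hP : ∀ i, P i ∈ C) (T : Finset ι) :
    ∀ M ∈ C, ∀ a : ℝ, 0 ≤ a → a + ∑ i ∈ T, w i = 1 →
      ENNReal.ofReal a • M + ∑ i ∈ T, ENNReal.ofReal (w i) • P i ∈ C := by
  induction T using Finset.induction_on with
  | empty =>
    intro M hM a _ h
    obtain rfl : a = 1 := by simpa using h
    simpa using hM
  | insert i T hi ih =>
    intro M hM a ha h
    rw [Finset.sum_insert hi, ← add_assoc] at h ⊢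
    rcases (add_nonneg ha (hw i)).eq_or_lt with h0 | hpos
    · have ha0 : a = 0 := by linarith [hw i]
      have hwi : w i = 0 := by linarith [hw i]
      have := ih M hM 0 le_rfl (by linarith)
      simpa [ha0, hwi] using this
    · have hmem := ih _ (hC M hM (P i) (hP i) (a / (a + w i)) (w i / (a + w i)) (by positivity)
        (div_nonneg (hw i) hpos.le) (by field_simp)) (a + w i) hpos.le h
      rwa [smul_add, smul_smul, smul_smul, ← ENNReal.ofReal_mul hpos.le,
        ← ENNReal.ofReal_mul hpos.le, mul_div_cancel₀ _ hpos.ne', mul_div_cancel₀ _ hpos.ne']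
        at hmem

variable (d)

/-- The closed fork-convex hull of the i.i.d. laws over a m.a.c. family `PP`
with densities contains all i.i.d. laws over finite mixtures of `PP`. -/
theorem statement6 (Γ : Measure (Seq d)) (hΓ : IsGamma d Γ)
    (PP : Set (Measure (RV d)))
    (hdens : ∀ P ∈ PP, IsProbabilityMeasure P ∧ P ≪ (volume : Measure (RV d)))
    (hmac : ∀ P ∈ PP, ∀ Q ∈ PP, P ≪ Q) :
    iidLaws d (finiteMixtures d PP) ⊆ clfconv d Γ (iidLaws d PP) := by
  rintro μ ⟨Q, ⟨k, α, P, hα, hα1, hP, rfl⟩, hμ⟩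
  set Q : Measure (RV d) := ∑ i, ENNReal.ofReal (α i) • P i
  obtain ⟨i₀⟩ : Nonempty (Fin k) := by
    by_contra h
    rw [not_nonempty_iff] at h
    simp at hα1
  have hac : ∀ M ∈ PP, M ≪ stdGaussian d := fun M hM =>
    (hdens M hM).2.trans (volume_absolutelyContinuous_stdGaussian d)
  -- the laws admissible as a single marginal in the construction below
  let C₀ : Set (Measure (RV d)) := {M | IsProbabilityMeasure M ∧ ∀ N ∈ PP, M ≪ N}
  have hmixC₀ : ∀ M ∈ C₀, ∀ N ∈ C₀, ∀ a b : ℝ, 0 ≤ a → 0 ≤ b → a + b = 1 →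
      ENNReal.ofReal a • M + ENNReal.ofReal b • N ∈ C₀ := by
    rintro M ⟨hM, hM'⟩ N ⟨hN, hN'⟩ a b ha hb hab
    refine ⟨⟨?_⟩, fun L hL => ((hM' L hL).smul_left _).add_left ((hN' L hL).smul_left _)⟩
    simp [← ENNReal.ofReal_add ha hb, hab]
  have hPC₀ : ∀ M ∈ PP, M ∈ C₀ := fun M hM => ⟨(hdens M hM).1, hmac M hM⟩
  have hac₀ : ∀ M ∈ C₀, M ≪ stdGaussian d := fun M hM =>
    (hM.2 _ (hP i₀)).trans (hac _ (hP i₀))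
  have hQC₀ : Q ∈ C₀ := by
    simpa using sum_smul_mem_of_mix_mem hmixC₀ α hα P (fun i => hPC₀ _ (hP i)) Finset.univ
      (P i₀) (hPC₀ _ (hP i₀)) 0 le_rfl (by simpa using hα1)
  have hQprob := hQC₀.1
  have hμ' : IsProductLaw d μ fun _ => Q := hμ
  have hmem : ∀ n, ∀ M ∈ PP, Measure.infinitePi (fun j : ℕ => if j < n then Q else M) ∈
      fconv d Γ (iidLaws d PP) := by
    intro n M hM S hS
    have hMprob := (hdens M hM).1
    induction n generalizing M with
    | zero => exact hS.1 ⟨M, hM, by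
      simp only [not_lt_zero, if_false]
      exact isProductLaw_infinitePi fun _ : ℕ => M⟩
    | succ n ih =>
      let seqLaw : Measure (RV d) → ℕ → Measure (RV d) := fun L j =>
        if j < n then Q else if j = n then L else M
      have hseqC₀ : ∀ L ∈ C₀, ∀ j, seqLaw L j ∈ C₀ := by
        intro L hL j
        simp only [seqLaw]
        split_ifs
        exacts [hQC₀, hL, hPC₀ M hM]
      let C : Set (Measure (RV d)) := {L | L ∈ C₀ ∧ Measure.infinitePi (seqLaw L) ∈ S}
      have hPC : ∀ L ∈ PP, L ∈ C := by
        intro L hL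
        refine ⟨hPC₀ L hL, ?_⟩
        have hLprob := (hdens L hL).1
        have hpre : ∀ j, (if j < n then Q else L) ∈ C₀ := fun j => by
          split_ifs
          exacts [hQC₀, hPC₀ L hL]
        have := fun j => (hpre j).1
        have := fun j => (hseqC₀ L (hPC₀ L hL) j).1
        have hseq : seqLaw L = fun j => if j < n + 1 then if j < n then Q else L else M := by
          funext j
          simp only [seqLaw]
          split_ifs <;> first | rfl | omega
        obtain ⟨h, hh⟩ := exists_isFCC_switch hΓ (fun j => hac₀ _ (hpre j))
          (fun _ => hac M hM) (n + 1) (fun j _ => (hpre j).2 M hM) (isProductLaw_infinitePi _)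
          (isProductLaw_infinitePi fun _ => M)
          (ρ := Measure.infinitePi (seqLaw L)) (hseq ▸ isProductLaw_infinitePi (seqLaw L))
        exact hS.2 _ (ih L hL hLprob) _
          (hS.1 ⟨M, hM, isProductLaw_infinitePi fun _ : ℕ => M⟩) _ _ _ hh
      have hmixC : ∀ L ∈ C, ∀ N ∈ C, ∀ a b : ℝ, 0 ≤ a → 0 ≤ b → a + b = 1 →
          ENNReal.ofReal a • L + ENNReal.ofReal b • N ∈ C := by
        intro L hL N hN a b ha hb hab
        have hR := hmixC₀ L hL.1 N hN.1 a b ha hb hab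
        have := fun j => (hseqC₀ L hL.1 j).1
        have := fun j => (hseqC₀ N hN.1 j).1
        have := fun j => (hseqC₀ _ hR j).1
        refine ⟨hR, hS.2 _ hL.2 _ hN.2 _ _ _ (isFCC_mix hΓ (fun j => hac₀ _ (hseqC₀ L hL.1 j))
          (fun j => hac₀ _ (hseqC₀ N hN.1 j)) (fun j => hac₀ _ (hseqC₀ _ hR j)) ha hb hab n
          ?_ ?_ ?_ (isProductLaw_infinitePi _) (isProductLaw_infinitePi _)
          (isProductLaw_infinitePi _))⟩
        · intro j hj
          simp [seqLaw, hj]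
        · intro j hj
          simp [seqLaw, hj]
        · simp [seqLaw]
      have hQC : Q ∈ C := by
        simpa using sum_smul_mem_of_mix_mem hmixC α hα P (fun i => hPC _ (hP i)) Finset.univ
          (P i₀) (hPC _ (hP i₀)) 0 le_rfl (by simpa using hα1)
      have hseq : seqLaw Q = fun j => if j < n + 1 then Q else M := by
        funext j
        simp only [seqLaw]
        split_ifs <;> first | rfl | omega
      exact hseq ▸ hQC.2
  refine ⟨hμ.1, hμ'.locAC hΓ fun _ => hac₀ Q hQC₀, _, fun n => hmem n (P i₀) (hP i₀), fun t => ?_⟩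
  refine tendsto_const_nhds.congr' ?_
  filter_upwards [eventually_ge_atTop t] with n hn
  have hpre : ∀ j, (if j < n then Q else P i₀) ∈ C₀ := fun j => by
    split_ifs
    exacts [hQC₀, hPC₀ _ (hP i₀)]
  have := fun j => (hpre j).1
  symm
  refine integral_eq_zero_of_ae ?_
  filter_upwards [hμ'.Z_ae_eq hΓ (fun _ => hac₀ Q hQC₀) t,
    (isProductLaw_infinitePi _).Z_ae_eq hΓ (fun j => hac₀ _ (hpre j)) t] with ω h1 h2
  rw [h1, h2, Pi.zero_apply, abs_eq_zero, sub_eq_zero]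
  refine Finset.prod_congr rfl fun j hj => ?_
  rw [if_pos ((Finset.mem_range.mp hj).trans_le hn)]

end SeqTest
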